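/- arXiv:2206.05208 — 3 statements merged into one kernel-verified Lean document; each statement's English description precedes it below -/
import Mathlib

section
/- For every integer m ≥ 2 there exist a prime number k with 4·log₂ m ≤ k ≤ 8·log₂ m and a comma-free picture code X ⊆ {0,1}^{k,k} such that |X| ≥ m^k. -/
/-- A picture over alphabet `A`: a rectangular array with at least one row
and one column. -/
structure Picture (A : Type) : Type where
  rows : ℕ
  cols : ℕ
  rows_pos : 0 < rows
  cols_pos : 0 < cols
  pix : Fin rows → Fin cols → A

namespace Picture

/-- Pixelwise projection of a picture along a map of alphabets. -/
def map {A B : Type} (f : A → B) (p : Picture A) : Picture B :=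
  ⟨p.rows, p.cols, p.rows_pos, p.cols_pos, fun i j => f (p.pix i j)⟩

/-- The pixel at (i,j) (0-based), or `none` if out of range. -/
def pget {A : Type} (p : Picture A) (i j : ℕ) : Option A :=
  if h : i < p.rows ∧ j < p.cols then some (p.pix ⟨i, h.1⟩ ⟨j, h.2⟩) else none

/-- The pixel at position (i,j) of the bordered picture of `p`, where the
border symbol `#` is `none`; row 0 and column 0 are border rows, the content
occupies rows `1..p.rows` and columns `1..p.cols`, and every other position
is a border (`#`) position. -/
def bpix {A : Type} (p : Picture A) (i j : ℕ) : Option A :=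
  if h : 1 ≤ i ∧ i ≤ p.rows ∧ 1 ≤ j ∧ j ≤ p.cols then
    some (p.pix ⟨i - 1, by omega⟩ ⟨j - 1, by omega⟩)
  else none

end Picture

/-- A `k`-tile over `A ∪ {#}`, the border symbol `#` being `none`. -/
abbrev BTile (A : Type) (k : ℕ) := Fin k → Fin k → Option A

/-- Number of rows of the bordered version of `p` used for `k`-tiles:
one border row on top and at least one at the bottom, with as many extra
border rows at the bottom as needed for `k × k` subpictures to exist. -/
def borderRows {A : Type} (p : Picture A) (k : ℕ) : ℕ := max (p.rows + 2) k

/-- Number of columns of the bordered version of `p` used for `k`-tiles. -/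
def borderCols {A : Type} (p : Picture A) (k : ℕ) : ℕ := max (p.cols + 2) k

/-- The set of `k`-tiles of the bordered picture of `p`. -/
def tilesOf {A : Type} (k : ℕ) (p : Picture A) : Set (BTile A k) :=
  { t | ∃ i j : ℕ, i + k ≤ borderRows p k ∧ j + k ≤ borderCols p k ∧
      ∀ a b : Fin k, t a b = p.bpix (i + (a : ℕ)) (j + (b : ℕ)) }

/-- The `k`-strictly-locally-testable language defined by the tile set `T`:
all pictures each of whose `k`-tiles (of the bordered picture) is in `T`. -/
def SLTLang {A : Type} (k : ℕ) (T : Set (BTile A k)) : Set (Picture A) :=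
  { p | tilesOf k p ⊆ T }

/-- A square picture of size `k × k` over `A` (no border symbol). -/
abbrev SqTile (A : Type) (k : ℕ) := Fin k → Fin k → A

/-- `x` occurs as a contiguous `k × k` subpicture of `p` with top-left
corner at position (i,j) (0-based). -/
def hasSqAt {A : Type} {k : ℕ} (p : Picture A) (i j : ℕ) (x : SqTile A k) : Prop :=
  ∀ a b : Fin k, p.pget (i + (a : ℕ)) (j + (b : ℕ)) = some (x a b)

/-- `X^{++}` : the pictures tessellated by an `r × c` grid (`r, c ≥ 1`) of
pictures of `X`. -/
def gridLang {A : Type} (k : ℕ) (X : Set (SqTile A k)) : Set (Picture A) :=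
  { p | k ∣ p.rows ∧ k ∣ p.cols ∧
      ∀ i j : ℕ, i * k + k ≤ p.rows → j * k + k ≤ p.cols →
        ∃ x ∈ X, hasSqAt p (i * k) (j * k) x }

/-- A comma-free picture code: no element of `X` occurs as an internal
`k × k` subpicture of any picture of `X^{2,2}` (the pictures of `gridLang`
of size `2k × 2k`). A subpicture at (i,j) is internal when its cells meet
neither the first nor the last row, and neither the first nor the last
column. -/
def IsCommaFree {A : Type} (k : ℕ) (X : Set (SqTile A k)) : Prop :=
  ∀ p : Picture A, p.rows = 2 * k → p.cols = 2 * k → p ∈ gridLang k X →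
    ∀ (i j : ℕ) (x : SqTile A k), x ∈ X → hasSqAt p i j x →
      ¬(1 ≤ i ∧ i + k < p.rows ∧ 1 ≤ j ∧ j + k < p.cols)

/-!
Fix a letter `a`, and consider the `k × k` pictures, `k` odd, whose rows of even index begin with
`a` and whose rows of odd index avoid `a`. The last row has even index too, so when one such picture
is stacked on another, the bottom-left cell of the upper one and the top-left cell of the lower one
both carry `a`. An internal `k × k` subpicture of a 2×2 grid covers these two adjacent cells of the
right-hand pictures, and one of them lies in a row of odd index of the subpicture, which is
therefore not in the code.

Over `q` letters the even rows alone leave `(k + 1) / 2 * (k - 1) ≥ k ^ 2 / 4` cells free, so there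
are at least `q ^ (k ^ 2 / 4) ≥ m ^ k` code-pictures once `4 log_q m ≤ k`; Bertrand's postulate
gives such a prime `k` below `8 log_q m`.
-/

open Real

theorem ncard_univ_pi {ι : Type*} [Fintype ι] {α : ι → Type*} (s : ∀ i, Set (α i)) :
    (Set.univ.pi s).ncard = ∏ i, (s i).ncard := by
  rw [← Nat.card_coe_set_eq, Nat.card_congr (Equiv.Set.univPi s), Nat.card_pi]
  simp only [Nat.card_coe_set_eq]

theorem prod_range_ite_even {M : Type*} [CommMonoid M] (u v : M) (t : ℕ) :
    ∏ i ∈ Finset.range (2 * t + 1), (if Even i then u else v) = u ^ (t + 1) * v ^ t := by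
  induction t with
  | zero => simp
  | succ t ih =>
    have h_odd : ¬Even (2 * t + 1) := by simp [parity_simps]
    have h_even : Even (2 * t + 1 + 1) := by simp [parity_simps]
    rw [mul_add_one, Finset.prod_range_succ, Finset.prod_range_succ, ih, if_neg h_odd,
      if_pos h_even, pow_succ v, pow_succ u (t + 1)]
    ac_rfl

theorem exists_prime_le_and_lt_two_mul {x : ℝ} (hx : 1 < x) :
    ∃ p : ℕ, p.Prime ∧ x ≤ p ∧ (p : ℝ) < 2 * x := by
  have h_ceil : 1 < ⌈x⌉₊ := Nat.lt_ceil.mpr (by exact_mod_cast hx)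
  obtain ⟨p, hp, h_lt, h_le⟩ := Nat.exists_prime_lt_and_le_two_mul (⌈x⌉₊ - 1) (by omega)
  refine ⟨p, hp, Nat.ceil_le.mp (by omega), ?_⟩
  have h_pred : ((⌈x⌉₊ - 1 : ℕ) : ℝ) < x := Nat.lt_ceil.mp (by omega)
  calc (p : ℝ) ≤ 2 * (⌈x⌉₊ - 1 : ℕ) := by exact_mod_cast h_le
    _ < 2 * x := by gcongr

theorem pow_le_pow_of_four_mul_logb_le {b m : ℝ} (hb : 1 < b) (hm : 0 < m) {t : ℕ} (ht : t ≠ 0)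
    (hmt : 4 * logb b m ≤ (2 * t + 1 : ℕ)) : m ^ (2 * t + 1) ≤ b ^ (2 * t * (t + 1)) := by
  rw [← rpow_natCast b, ← logb_le_iff_le_rpow hb (by positivity), logb_pow]
  have h_one_le : (1 : ℝ) ≤ t := mod_cast Nat.one_le_iff_ne_zero.mpr ht
  push_cast at hmt ⊢
  calc (2 * t + 1) * logb b m ≤ (2 * t + 1) * ((2 * t + 1) / 4) := by gcongr; linarith
    _ ≤ 2 * t * (t + 1) := by nlinarith

section Codes

variable {A : Type} {k : ℕ}

theorem hasSqAt.apply_eq_apply {p : Picture A} {i j i' j' : ℕ} {x y : SqTile A k}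
    (hx : hasSqAt p i j x) (hy : hasSqAt p i' j' y) {r c r' c' : Fin k}
    (h_row : i + r = i' + r') (h_col : j + c = j' + c') : x r c = y r' c' := by
  have hx_rc := hx r c
  rw [h_row, h_col, hy r' c'] at hx_rc
  exact (Option.some.inj hx_rc).symm

/-- The letters allowed at cell `(r, c)` in a picture of `combCode a k`. -/
def combLetters (a : A) (r c : ℕ) : Set A :=
  if Even r then (if c = 0 then {a} else Set.univ) else {a}ᶜ

/-- The comb code of the letter `a`: the `k × k` pictures whose rows of even index begin with `a`
and whose rows of odd index avoid `a`, rows being numbered from `0`. It is written as a product of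
sets of letters so that its cardinality is a product over the cells. -/
def combCode (a : A) (k : ℕ) : Set (SqTile A k) :=
  Set.univ.pi fun r : Fin k => Set.univ.pi fun c : Fin k => combLetters a r c

theorem apply_eq_of_mem_combCode {a : A} {x : SqTile A k} (hx : x ∈ combCode a k) {r c : Fin k}
    (hr : Even (r : ℕ)) (hc : (c : ℕ) = 0) : x r c = a := by
  simpa [combLetters, hr, hc] using hx r trivial c trivial

theorem apply_ne_of_mem_combCode {a : A} {x : SqTile A k} (hx : x ∈ combCode a k) {r : Fin k}
    (hr : Odd (r : ℕ)) (c : Fin k) : x r c ≠ a := by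
  simpa [combLetters, Nat.not_even_iff_odd.mpr hr] using hx r trivial c trivial

theorem isCommaFree_combCode (a : A) (hk : Odd k) : IsCommaFree k (combCode a k) := by
  rintro p h_rows h_cols ⟨-, -, h_grid⟩ i j x hx hxp ⟨hi, hik, hj, hjk⟩
  obtain ⟨y, hy, hyp⟩ := h_grid 0 1 (by omega) (by omega)
  obtain ⟨z, hz, hzp⟩ := h_grid 1 1 (by omega) (by omega)
  have h_above : x ⟨k - 1 - i, by omega⟩ ⟨k - j, by omega⟩ = a := by
    rw [hxp.apply_eq_apply hyp (r' := ⟨k - 1, by omega⟩) (c' := ⟨0, by omega⟩)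
      (by dsimp only; omega) (by dsimp only; omega)]
    exact apply_eq_of_mem_combCode hy (Nat.Odd.sub_odd hk odd_one) rfl
  have h_below : x ⟨k - i, by omega⟩ ⟨k - j, by omega⟩ = a := by
    rw [hxp.apply_eq_apply hzp (r' := ⟨0, by omega⟩) (c' := ⟨0, by omega⟩)
      (by dsimp only; omega) (by dsimp only; omega)]
    exact apply_eq_of_mem_combCode hz Even.zero rfl
  rcases Nat.even_or_odd (k - i) with h_even | h_odd
  · have h_odd : Odd (k - 1 - i) := by
      rw [Nat.sub_right_comm]
      exact Nat.Even.sub_odd (by omega) h_even odd_one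
    exact apply_ne_of_mem_combCode hx h_odd _ h_above
  · exact apply_ne_of_mem_combCode hx h_odd _ h_below

theorem ncard_combCode [Finite A] (a : A) (t : ℕ) :
    (combCode a (2 * t + 1)).ncard =
      (Nat.card A ^ (2 * t)) ^ (t + 1) * ((Nat.card A - 1) ^ (2 * t + 1)) ^ t := by
  have h_row (r : ℕ) : ∏ c : Fin (2 * t + 1), (combLetters a r c).ncard =
      if Even r then Nat.card A ^ (2 * t) else (Nat.card A - 1) ^ (2 * t + 1) := by
    split_ifs with hr
    · simp [combLetters, hr, Fin.prod_univ_succ, Set.ncard_univ]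
    · simp only [combLetters, hr, if_false, Set.ncard_compl {a}, Set.ncard_singleton,
        Finset.prod_const, Finset.card_univ, Fintype.card_fin]
  simp only [combCode, ncard_univ_pi, h_row]
  rw [← prod_range_ite_even, Finset.prod_range]

theorem pow_le_ncard_combCode [Finite A] [Nontrivial A] (a : A) (t : ℕ) :
    Nat.card A ^ (2 * t * (t + 1)) ≤ (combCode a (2 * t + 1)).ncard := by
  have h_pos : 0 < Nat.card A - 1 := Nat.sub_pos_of_lt Finite.one_lt_card
  rw [ncard_combCode, pow_mul]
  exact Nat.le_mul_of_pos_right _ (by positivity)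

end Codes

theorem commaFree_enough_general {A : Type} [Finite A] [Nontrivial A] {m : ℝ}
    (hm : Nat.card A ≤ m) :
    ∃ k : ℕ, Nat.Prime k ∧ 4 * logb (Nat.card A) m ≤ k ∧ k ≤ 8 * logb (Nat.card A) m ∧
      ∃ X : Set (SqTile A k), IsCommaFree k X ∧ m ^ k ≤ X.ncard := by
  have h_card : (1 : ℝ) < Nat.card A := by exact_mod_cast Finite.one_lt_card (α := A)
  have hm_pos : 0 < m := by linarith
  have h_log : 1 ≤ logb (Nat.card A) m := by
    rwa [le_logb_iff_rpow_le h_card hm_pos, rpow_one]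
  obtain ⟨k, hk, h_lower, h_upper⟩ :=
    exists_prime_le_and_lt_two_mul (x := 4 * logb (Nat.card A) m) (by linarith)
  have hk_two : 2 < k := by
    have : (2 : ℝ) < k := by linarith
    exact_mod_cast this
  obtain ⟨t, rfl⟩ : Odd k := hk.odd_of_ne_two hk_two.ne'
  obtain ⟨a⟩ : Nonempty A := inferInstance
  refine ⟨2 * t + 1, hk, h_lower, by linarith, combCode a _, isCommaFree_combCode a ⟨t, rfl⟩, ?_⟩
  calc m ^ (2 * t + 1) ≤ (Nat.card A : ℝ) ^ (2 * t * (t + 1)) :=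
        pow_le_pow_of_four_mul_logb_le h_card hm_pos (by omega) h_lower
    _ ≤ (combCode a (2 * t + 1)).ncard := by exact_mod_cast pow_le_ncard_combCode a t

/-- For every `m ≥ 2` there are a prime `k` with
`4·log₂ m ≤ k ≤ 8·log₂ m` and a binary comma-free picture code
`X ⊆ {0,1}^{k,k}` with `|X| ≥ m^k`. -/
theorem commaFree_enough :
    ∀ m : ℕ, 2 ≤ m →
      ∃ k : ℕ, Nat.Prime k ∧
        4 * Real.logb 2 (m : ℝ) ≤ (k : ℝ) ∧ (k : ℝ) ≤ 8 * Real.logb 2 (m : ℝ) ∧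
        ∃ X : Set (SqTile Bool k), IsCommaFree k X ∧ m ^ k ≤ X.ncard := by
  intro m hm
  simpa only [Nat.card_eq_fintype_card, Fintype.card_bool, Nat.cast_ofNat, ← Nat.cast_pow,
    Nat.cast_le] using commaFree_enough_general (A := Bool) (m := m) (by simpa using hm)
end

section
/- For every finite alphabet Σ with |Σ| ≥ 2, let R = ⋃_{a ∈ Σ} R_a, where R_a is the set of all square pictures over the single letter a of size at least (2,2). Then R is tiling recognizable, and every k-tiling system (Σ, Γ, T_k, π), for any k ≥ 2, recognizing R satisfies |Γ| ≥ 2·|Σ|, i.e., its alphabetic ratio is at least 2. -/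
/-- The language `R = ⋃_{a ∈ Sig} R_a` of all square pictures of size at
least `(2,2)` all of whose pixels carry one and the same letter. -/
def unionSquares (Sig : Type) : Set (Picture Sig) :=
  { p | p.rows = p.cols ∧ 2 ≤ p.rows ∧ ∃ a : Sig, ∀ i j, p.pix i j = a }

/-!
Marking the diagonal turns the monochromatic squares into a local language: the corner and border
tiles force the mark to start in the top left corner and to end in the bottom right one, and it can
only move diagonally in between. Two copies of each letter thus suffice.

Conversely, if a letter has a single preimage under the projection, the preimage of a large
monochromatic square over it is again monochromatic, and lengthening its rows by one pixel creates
no new tile; hence the recognized language would contain a rectangle that is not a square.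
-/

open scoped Cardinal

universe u

namespace Picture

variable {A B : Type}

instance (p : Picture A) : NeZero p.rows := ⟨p.rows_pos.ne'⟩

instance (p : Picture A) : NeZero p.cols := ⟨p.cols_pos.ne'⟩

/-- The picture of size `(m, n)` whose pixels are the values of `f` at the 0-based positions. The
sizes carry `NeZero` instances so that sizes such as `k + 2` need no positivity proof. -/
def ofFn (f : ℕ → ℕ → A) (m n : ℕ) [NeZero m] [NeZero n] : Picture A :=
  ⟨m, n, Nat.pos_of_neZero m, Nat.pos_of_neZero n, fun i j => f i j⟩

/-- The monochromatic picture of size `(m, n)` over the letter `a`. -/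
def const (a : A) (m n : ℕ) [NeZero m] [NeZero n] : Picture A :=
  ofFn (fun _ _ => a) m n

/-- The monochromatic picture of size `(m, n)` over the letter `a` whose main diagonal is marked
by the Boolean `true`; these are the local pictures that certify that a picture is a square. -/
def markedDiag (a : A) (m n : ℕ) [NeZero m] [NeZero n] : Picture (A × Bool) :=
  ofFn (fun i j => (a, decide (i = j))) m n

theorem eq_ofFn_iff {p : Picture A} {f : ℕ → ℕ → A} {m n : ℕ} [NeZero m] [NeZero n] :
    p = ofFn f m n ↔ p.rows = m ∧ p.cols = n ∧ ∀ i j, p.pix i j = f i j := by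
  constructor
  · rintro rfl
    exact ⟨rfl, rfl, fun _ _ => rfl⟩
  · obtain ⟨r, c, _, _, pix⟩ := p
    rintro ⟨rfl, rfl, h⟩
    simpa [ofFn, funext_iff] using h

theorem bpix_ofFn (f : ℕ → ℕ → A) (m n i j : ℕ) [NeZero m] [NeZero n] :
    (ofFn f m n).bpix i j =
      if 1 ≤ i ∧ i ≤ m ∧ 1 ≤ j ∧ j ≤ n then some (f (i - 1) (j - 1)) else none :=
  rfl

theorem bpix_const (a : A) (m n i j : ℕ) [NeZero m] [NeZero n] :
    (const a m n).bpix i j = if 1 ≤ i ∧ i ≤ m ∧ 1 ≤ j ∧ j ≤ n then some a else none :=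
  rfl

theorem bpix_markedDiag (a : A) (m n i j : ℕ) [NeZero m] [NeZero n] :
    (markedDiag a m n).bpix i j =
      if 1 ≤ i ∧ i ≤ m ∧ 1 ≤ j ∧ j ≤ n then some (a, decide (i = j)) else none := by
  rw [markedDiag, bpix_ofFn]
  split_ifs with h
  · simp only [show i - 1 = j - 1 ↔ i = j by omega]
  · rfl

theorem bpix_succ_succ (p : Picture A) (i : Fin p.rows) (j : Fin p.cols) :
    p.bpix (i + 1) (j + 1) = some (p.pix i j) := by
  simp [bpix]

theorem bpix_eq_none_iff {p : Picture A} {i j : ℕ} :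
    p.bpix i j = none ↔ ¬(1 ≤ i ∧ i ≤ p.rows ∧ 1 ≤ j ∧ j ≤ p.cols) := by
  simp [bpix]

theorem exists_eq_const_of_map_eq_const {f : A → B} {b : B} {p : Picture A} {m n : ℕ}
    [NeZero m] [NeZero n] (hb : (f ⁻¹' {b}).Subsingleton) (hp : p.map f = const b m n) :
    ∃ a, f a = b ∧ p = const a m n := by
  obtain ⟨hrows, hcols, hpix⟩ := eq_ofFn_iff.1 hp
  exact ⟨p.pix 0 0, hpix 0 0, eq_ofFn_iff.2 ⟨hrows, hcols, fun i j => hb (hpix i j) (hpix 0 0)⟩⟩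

end Picture

open Picture

variable {A : Type}

theorem mem_unionSquares_iff {p : Picture A} :
    p ∈ unionSquares A ↔ ∃ a n, p = const a (n + 2) (n + 2) := by
  constructor
  · rintro ⟨hsquare, htwo, a, ha⟩
    exact ⟨a, p.rows - 2, eq_ofFn_iff.2 ⟨by omega, by omega, ha⟩⟩
  · rintro ⟨a, n, rfl⟩
    exact ⟨rfl, Nat.le_add_left 2 n, a, fun _ _ => rfl⟩

/-- The language of monochromatic squares of size at least `(2, 2)` with marked diagonal. -/
def diagSquares (A : Type) : Set (Picture (A × Bool)) :=
  {p | ∃ a n, p = markedDiag a (n + 2) (n + 2)}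

/-- The `k`-tiles occurring in the pictures of the language `L`, i.e. the least tile set whose
`k`-strictly-locally-testable language contains `L`. -/
def langTiles (k : ℕ) (L : Set (Picture A)) : Set (BTile A k) :=
  ⋃ p ∈ L, tilesOf k p

theorem subset_SLTLang_langTiles (k : ℕ) (L : Set (Picture A)) :
    L ⊆ SLTLang k (langTiles k L) :=
  fun _ hp => Set.subset_biUnion_of_mem hp

section DiagSquares

variable {p : Picture (A × Bool)} {i j : ℕ}

theorem exists_bpix_eq_markedDiag (hp : p ∈ SLTLang 2 (langTiles 2 (diagSquares A)))
    (hi : i ≤ p.rows) (hj : j ≤ p.cols) :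
    ∃ a n i' j', ∀ x < 2, ∀ y < 2,
      p.bpix (i + x) (j + y) = (markedDiag a (n + 2) (n + 2)).bpix (i' + x) (j' + y) := by
  have htile : (fun x y : Fin 2 => p.bpix (i + x) (j + y)) ∈ langTiles 2 (diagSquares A) :=
    hp ⟨i, j, by rw [borderRows]; omega, by rw [borderCols]; omega, fun _ _ => rfl⟩
  obtain ⟨_, ⟨a, n, rfl⟩, i', j', -, -, h⟩ := Set.mem_iUnion₂.1 htile
  exact ⟨a, n, i', j', fun x hx y hy => h ⟨x, hx⟩ ⟨y, hy⟩⟩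

/-- Here `(i', j')` is the position, in a marked square over `a`, of the tile that `p` shows at
`(i, j)`. -/
theorem exists_window_of_mem (hp : p ∈ SLTLang 2 (langTiles 2 (diagSquares A)))
    (hi : i < p.rows) (hj : j < p.cols) :
    ∃ a i' j', (i = 0 ↔ i' = 0) ∧ (j = 0 ↔ j' = 0) ∧
      p.bpix (i + 1) (j + 1) = some (a, decide (i' = j')) ∧
      (i ≠ 0 → p.bpix i (j + 1) = some (a, decide (i' = j' + 1))) ∧
      (j ≠ 0 → p.bpix (i + 1) j = some (a, decide (i' + 1 = j'))) ∧
      (i ≠ 0 → j ≠ 0 → p.bpix i j = some (a, decide (i' = j'))) := by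
  obtain ⟨a, n, i', j', h⟩ := exists_bpix_eq_markedDiag hp hi.le hj.le
  have hdiag := h 0 two_pos 0 two_pos
  have habove := h 0 two_pos 1 one_lt_two
  have hleft := h 1 one_lt_two 0 two_pos
  have hpix := h 1 one_lt_two 1 one_lt_two
  simp only [add_zero, bpix_markedDiag] at hdiag habove hleft hpix
  have hpix_ne : p.bpix (i + 1) (j + 1) ≠ none := by grind [bpix_eq_none_iff]
  have hrow : i = 0 ↔ i' = 0 := by grind [bpix_eq_none_iff]
  have hcol : j = 0 ↔ j' = 0 := by grind [bpix_eq_none_iff]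
  exact ⟨a, i', j', hrow, hcol, by grind, by grind, by grind, by grind⟩

theorem bpix_succ_succ_eq_of_mem (hp : p ∈ SLTLang 2 (langTiles 2 (diagSquares A)))
    (hi : i < p.rows) (hj : j < p.cols) :
    p.bpix (i + 1) (j + 1) = some ((p.pix 0 0).1, decide (i = j)) := by
  induction i generalizing j with
  | zero =>
    induction j with
    | zero =>
      obtain ⟨a, i', j', hi0, hj0, hpix, -⟩ := exists_window_of_mem hp hi hj
      have hcorner : p.bpix 1 1 = some (p.pix 0 0) := p.bpix_succ_succ 0 0
      have hletter : (p.pix 0 0).1 = a := by grind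
      have hmark : i' = j' := by omega
      simpa [hletter, hmark] using hpix
    | succ j ih =>
      obtain ⟨a, i', j', hi0, hj0, hpix, -, hleft, -⟩ := exists_window_of_mem hp hi hj
      have hletter : (p.pix 0 0).1 = a := by grind
      have hmark : i' ≠ j' := by omega
      simpa [hletter, hmark] using hpix
  | succ i ih =>
    cases j with
    | zero =>
      obtain ⟨a, i', j', hi0, hj0, hpix, habove, -⟩ := exists_window_of_mem hp hi hj
      have hletter : (p.pix 0 0).1 = a := by grind
      have hmark : i' ≠ j' := by omega
      simpa [hletter, hmark] using hpix
    | succ j =>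
      obtain ⟨a, i', j', -, -, hpix, -, -, hdiag⟩ := exists_window_of_mem hp hi hj
      calc p.bpix (i + 1 + 1) (j + 1 + 1)
        _ = p.bpix (i + 1) (j + 1) := hpix.trans (hdiag i.succ_ne_zero j.succ_ne_zero).symm
        _ = some ((p.pix 0 0).1, decide (i = j)) := ih (by omega) (by omega)
        _ = some ((p.pix 0 0).1, decide (i + 1 = j + 1)) := by simp

theorem eq_markedDiag_of_mem (hp : p ∈ SLTLang 2 (langTiles 2 (diagSquares A))) :
    p = markedDiag (p.pix 0 0).1 p.rows p.cols :=
  eq_ofFn_iff.2 ⟨rfl, rfl, fun i j => Option.some_injective _ <|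
    (p.bpix_succ_succ i j).symm.trans (bpix_succ_succ_eq_of_mem hp i.2 j.2)⟩

end DiagSquares

/-- A tile whose only pixel is its top left one occurs in a marked square only at the bottom right
corner, where the pixel is marked. -/
theorem eq_of_markedDiag_mem {a : A} {m n : ℕ} [NeZero m] [NeZero n]
    (h : markedDiag a m n ∈ SLTLang 2 (langTiles 2 (diagSquares A))) : m = n := by
  obtain ⟨b, l, i, j, hwindow⟩ := exists_bpix_eq_markedDiag (i := m) (j := n) h le_rfl le_rfl
  have hcorner := hwindow 0 two_pos 0 two_pos
  have hright := hwindow 0 two_pos 1 one_lt_two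
  have hbelow := hwindow 1 one_lt_two 0 two_pos
  have hm := NeZero.pos m
  have hn := NeZero.pos n
  grind [bpix_markedDiag]

/-- If there were one row, the marked last pixel would lie in a top right corner tile, whereas the
top right corner of a square of size at least `(2, 2)` is not marked. -/
theorem two_le_of_markedDiag_mem {a : A} {m n : ℕ} [NeZero m] [NeZero n]
    (h : markedDiag a m n ∈ SLTLang 2 (langTiles 2 (diagSquares A))) : 2 ≤ m := by
  have hsquare := eq_of_markedDiag_mem h
  obtain ⟨b, l, i, j, hwindow⟩ :=
    exists_bpix_eq_markedDiag (i := 0) (j := n) h (Nat.zero_le _) le_rfl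
  have habove := hwindow 0 two_pos 0 two_pos
  have hcorner := hwindow 1 one_lt_two 0 two_pos
  have hright := hwindow 1 one_lt_two 1 one_lt_two
  have hm := NeZero.pos m
  grind [bpix_markedDiag]

theorem SLTLang_langTiles_diagSquares (A : Type) :
    SLTLang 2 (langTiles 2 (diagSquares A)) = diagSquares A := by
  refine Set.Subset.antisymm (fun p hp => ?_) (subset_SLTLang_langTiles 2 _)
  have hdiag := eq_markedDiag_of_mem hp
  have hmem := hdiag ▸ hp
  have hsquare := eq_of_markedDiag_mem hmem
  have htwo := two_le_of_markedDiag_mem hmem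
  exact ⟨_, p.rows - 2, eq_ofFn_iff.2 ⟨by omega, by omega, (eq_ofFn_iff.1 hdiag).2.2⟩⟩

theorem map_fst_image_diagSquares (A : Type) :
    Picture.map Prod.fst '' diagSquares A = unionSquares A := by
  ext p
  rw [mem_unionSquares_iff]
  constructor
  · rintro ⟨_, ⟨a, n, rfl⟩, rfl⟩
    exact ⟨a, n, rfl⟩
  · rintro ⟨a, n, rfl⟩
    exact ⟨_, ⟨a, n, rfl⟩, rfl⟩

/-- Tiles starting in the columns `0` and `1` end before the right border. Those starting further to
the right can be shifted left by one column without reaching the left border. -/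
theorem tilesOf_const_succ_subset (a : A) {k m n : ℕ} [NeZero m] [NeZero n] (hkn : k ≤ n) :
    tilesOf k (const a m (n + 1)) ⊆ tilesOf k (const a m n) := by
  rintro t ⟨i, j, hi, hj, ht⟩
  change j + k ≤ max (n + 1 + 2) k at hj
  refine ⟨i, if j ≤ 1 then j else j - 1, hi, ?_, fun x y => ?_⟩
  · change _ ≤ max (n + 2) k
    split_ifs <;> omega
  · rw [ht, bpix_const, bpix_const]
    congr 1
    grind

theorem const_succ_mem_map_image_SLTLang {Γ : Type} {π : Γ → A} {k m n : ℕ} [NeZero m]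
    [NeZero n] {T : Set (BTile Γ k)} {a : A} (ha : (π ⁻¹' {a}).Subsingleton) (hkn : k ≤ n)
    (h : const a m n ∈ Picture.map π '' SLTLang k T) :
    const a m (n + 1) ∈ Picture.map π '' SLTLang k T := by
  obtain ⟨q, hq, hmap⟩ := h
  obtain ⟨g, rfl, rfl⟩ := exists_eq_const_of_map_eq_const ha hmap
  exact ⟨const g m (n + 1), (tilesOf_const_succ_subset g hkn).trans hq, rfl⟩

theorem nontrivial_preimage_of_unionSquares_eq {Γ : Type} {π : Γ → A} {k : ℕ}
    {T : Set (BTile Γ k)} (h : unionSquares A = Picture.map π '' SLTLang k T) (a : A) :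
    (π ⁻¹' {a}).Nontrivial := by
  by_contra hnontriv
  have hsquare : const a (k + 2) (k + 2) ∈ unionSquares A := mem_unionSquares_iff.2 ⟨a, k, rfl⟩
  have hrect : const a (k + 2) (k + 2 + 1) ∈ unionSquares A :=
    h ▸ const_succ_mem_map_image_SLTLang (Set.not_nontrivial_iff.1 hnontriv)
      (Nat.le_add_right k 2) (h ▸ hsquare)
  exact (Nat.lt_succ_self (k + 2)).ne hrect.1

theorem mk_mul_le_of_forall_le_mk_preimage {α β : Type u} (f : α → β) {c : Cardinal.{u}}
    (h : ∀ b, c ≤ #(f ⁻¹' {b})) : #β * c ≤ #α :=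
  calc
    #β * c = Cardinal.sum fun _ : β => c := (Cardinal.sum_const' β c).symm
    _ ≤ Cardinal.sum fun b => #(f ⁻¹' {b}) := Cardinal.sum_le_sum _ _ h
    _ = #(Σ b, f ⁻¹' {b}) := (Cardinal.mk_sigma _).symm
    _ = #α := Cardinal.mk_congr (Equiv.sigmaPreimageEquiv f)

theorem minimal_alphabetic_ratio_general (A : Type) :
    (∃ T : Set (BTile (A × Bool) 2), unionSquares A = Picture.map Prod.fst '' SLTLang 2 T) ∧
      ∀ (k : ℕ) (Γ : Type) (T : Set (BTile Γ k)) (π : Γ → A),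
        unionSquares A = Picture.map π '' SLTLang k T → 2 * #A ≤ #Γ := by
  constructor
  · exact ⟨langTiles 2 (diagSquares A), by
      rw [SLTLang_langTiles_diagSquares, map_fst_image_diagSquares]⟩
  · intro k Γ T π h
    rw [mul_comm]
    refine mk_mul_le_of_forall_le_mk_preimage π fun a => Cardinal.two_le_iff_one_lt.2 <|
      Cardinal.one_lt_iff_nontrivial.2 (nontrivial_preimage_of_unionSquares_eq h a).coe_sort

/-- For every finite alphabet with `|Σ| ≥ 2`, the language
`R = ⋃_{a ∈ Σ} R_a` of monochromatic squares of size at least 2 is tiling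
recognizable, and every `k`-tiling system (`k ≥ 2`) recognizing it has a
local alphabet of cardinality at least `2·|Σ|` (alphabetic ratio ≥ 2). -/
theorem minimal_alphabetic_ratio :
    ∀ (Sig : Type) (_ : Fintype Sig), 2 ≤ Fintype.card Sig →
      (∃ (Gam : Type) (_ : Fintype Gam) (T : Set (BTile Gam 2)) (π : Gam → Sig),
        unionSquares Sig = Picture.map π '' SLTLang 2 T) ∧
      (∀ k : ℕ, 2 ≤ k →
        ∀ (Gam : Type) (_ : Fintype Gam) (T : Set (BTile Gam k)) (π : Gam → Sig),
          unionSquares Sig = Picture.map π '' SLTLang k T →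
          2 * Fintype.card Sig ≤ Fintype.card Gam) := by
  intro Sig _ _
  obtain ⟨⟨T, hT⟩, hratio⟩ := minimal_alphabetic_ratio_general Sig
  refine ⟨⟨Sig × Bool, inferInstance, T, Prod.fst, hT⟩, fun k _ Gam _ T π h => ?_⟩
  exact_mod_cast Cardinal.mk_fintype Sig ▸ Cardinal.mk_fintype Gam ▸ hratio k Gam T π h
end

section
/- Let k ≥ 2, let R ⊆ Σ^{++} be tiling recognizable, and let the padded language R^(k) over Σ_$ = Σ ∪ {$} be recognized by the tiling system (Σ_$, Γ, T, π). Then there exist a finite alphabet B whose elements are pairs (f(r), π(r)) ∈ Γ^{4k} × Σ_$^{k,k} for r ranging over the k×k subpictures occurring in the k-tessellations of pictures of L(T) (f(r) being the frame of r), a set M of 2-tiles over B ∪ {#}, and a picture morphism π_k mapping each element (f(r), π(r)) of B to the k×k picture π(r), such that R^(k) = π_k(L(M)), where L(M) is the local language over B defined by M. -/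
/-- The image of a picture language `L ⊆ Γ^{++}` under the picture morphism
sending each letter `γ` to the `k × k` picture `φ γ`, assembled in a grid:
a picture `q` is in the image iff it is obtained from some `p ∈ L` by
replacing each pixel of `p` by its `k × k` code-picture. -/
def encodedLang {Gam Lam : Type} (k : ℕ) (φ : Gam → SqTile Lam k)
    (L : Set (Picture Gam)) : Set (Picture Lam) :=
  { q | ∃ p ∈ L, q.rows = p.rows * k ∧ q.cols = p.cols * k ∧
      ∀ (i j : ℕ) (hi : i < p.rows) (hj : j < p.cols),
        hasSqAt q (i * k) (j * k) (φ (p.pix ⟨i, hi⟩ ⟨j, hj⟩)) }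

/-- The padded language `R^(k)` over `Σ ∪ {$}` (the padding symbol `$`
being `none`): each picture of `R` is extended with between 1 and `k`
columns of `$` on the right and between 1 and `k` rows of `$` at the
bottom, so that both sides of the result are multiples of `k`. -/
def padded {Sig : Type} (k : ℕ) (R : Set (Picture Sig)) :
    Set (Picture (Option Sig)) :=
  { q | ∃ p ∈ R,
      p.rows < q.rows ∧ q.rows ≤ p.rows + k ∧
      p.cols < q.cols ∧ q.cols ≤ p.cols + k ∧
      k ∣ q.rows ∧ k ∣ q.cols ∧
      ∀ i j : ℕ, i < q.rows → j < q.cols → q.pget i j = some (p.pget i j) }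

/-- The frame of a `k × k` picture: the quadruple
(first row, last column, last row, first column). -/
def frameOf {Gam : Type} {k : ℕ} (hk : 0 < k) (r : SqTile Gam k) :
    (Fin k → Gam) × (Fin k → Gam) × (Fin k → Gam) × (Fin k → Gam) :=
  (fun j => r ⟨0, hk⟩ j,
   fun i => r i ⟨k - 1, by omega⟩,
   fun j => r ⟨k - 1, by omega⟩ j,
   fun i => r i ⟨0, hk⟩)

/-!
Cut a picture of `L(T)` with sides divisible by `k` into `k × k` blocks. A `2 × 2` tile of it either
lies inside one block, and is then allowed by `T` as soon as that block occurs in some picture of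
`L(T)`, or it straddles several blocks and only meets their frames. So replacing every block by
another occurring block with the same frame does not leave `L(T)`, and one may fix one
representative block `σ(b)` for each letter `b = (f(r), π(r))`. The pictures over these letters
whose expansion by `σ` is in `L(T)` form a local language, because the preimage of a local language
under a picture morphism is local, and `π ∘ σ` is the required morphism.
-/

namespace Picture

variable {A : Type} {k : ℕ}

theorem pget_of_lt {p : Picture A} {i j : ℕ} (hi : i < p.rows) (hj : j < p.cols) :
    p.pget i j = some (p.pix ⟨i, hi⟩ ⟨j, hj⟩) :=
  dif_pos ⟨hi, hj⟩

theorem pget_ne_none_iff {p : Picture A} {i j : ℕ} :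
    p.pget i j ≠ none ↔ i < p.rows ∧ j < p.cols := by
  simp [pget]

theorem ext_pget {p q : Picture A} (hrows : p.rows = q.rows) (hcols : p.cols = q.cols)
    (hpget : ∀ i < p.rows, ∀ j < p.cols, p.pget i j = q.pget i j) : p = q := by
  obtain ⟨m, n, hm, hn, f⟩ := p
  obtain ⟨m', n', hm', hn', g⟩ := q
  obtain rfl : m = m' := hrows
  obtain rfl : n = n' := hcols
  have hfg : f = g := by
    ext i j
    have hij := hpget i i.isLt j j.isLt
    rw [pget_of_lt i.isLt j.isLt, pget_of_lt i.isLt j.isLt] at hij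
    exact Option.some.inj hij
  rw [hfg]

theorem exists_hasSqAt {p : Picture A} {i j : ℕ} (hi : i + k ≤ p.rows) (hj : j + k ≤ p.cols) :
    ∃ x : SqTile A k, hasSqAt p i j x :=
  ⟨fun a c => p.pix ⟨i + a, by omega⟩ ⟨j + c, by omega⟩,
    fun _ _ => pget_of_lt (by omega) (by omega)⟩

/-- The picture `p`, with its top-left pixel at the origin, extended by the border symbol to the
whole plane. -/
def plane (p : Picture A) (x y : ℤ) : Option A :=
  if 0 ≤ x ∧ 0 ≤ y then p.pget x.toNat y.toNat else none

theorem plane_natCast (p : Picture A) (i j : ℕ) : p.plane i j = p.pget i j := by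
  simp [plane]

theorem plane_ne_none_iff {p : Picture A} {x y : ℤ} :
    p.plane x y ≠ none ↔ (0 ≤ x ∧ x < p.rows) ∧ 0 ≤ y ∧ y < p.cols := by
  by_cases h : 0 ≤ x ∧ 0 ≤ y
  · rw [plane, if_pos h, pget_ne_none_iff]
    omega
  · rw [plane, if_neg h]
    simp only [ne_eq, not_true, false_iff]
    omega

theorem bpix_eq_plane (p : Picture A) (i j : ℕ) : p.bpix i j = p.plane (i - 1) (j - 1) := by
  by_cases h : 1 ≤ i ∧ i ≤ p.rows ∧ 1 ≤ j ∧ j ≤ p.cols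
  · obtain ⟨i, rfl⟩ := Nat.exists_eq_add_of_le' h.1
    obtain ⟨j, rfl⟩ := Nat.exists_eq_add_of_le' h.2.2.1
    rw [bpix, dif_pos h, Nat.cast_add_one, Nat.cast_add_one, add_sub_cancel_right,
      add_sub_cancel_right, plane_natCast, pget_of_lt (by omega) (by omega)]
    rfl
  · rw [bpix, dif_neg h, eq_comm, ← not_ne_iff, plane_ne_none_iff]
    omega

/-- The `2 × 2` subpicture of the plane extension of `p` with top-left corner `(x, y)`. -/
def window (p : Picture A) (x y : ℤ) : BTile A 2 :=
  fun u v => p.plane (x + (u : ℕ)) (y + (v : ℕ))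

end Picture

/-- The tile consisting of border symbols only. It is not a tile of any bordered picture, but it
occurs in plane extensions. -/
def blankTile (A : Type) : BTile A 2 := fun _ _ => none

theorem Picture.window_ne_blankTile_iff {A : Type} {p : Picture A} {x y : ℤ} :
    p.window x y ≠ blankTile A ↔ (-1 ≤ x ∧ x < p.rows) ∧ -1 ≤ y ∧ y < p.cols := by
  have hrows := p.rows_pos
  have hcols := p.cols_pos
  have hmeets : p.window x y ≠ blankTile A ↔
      ∃ u v : Fin 2, p.plane (x + (u : ℕ)) (y + (v : ℕ)) ≠ none := by
    simp only [Function.ne_iff, window, blankTile]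
  simp only [hmeets, plane_ne_none_iff, Fin.exists_fin_two, Fin.val_zero, Fin.val_one]
  omega

section LocalLanguages

variable {A : Type} {k : ℕ}

theorem mem_tilesOf_two_iff {p : Picture A} {t : BTile A 2} :
    t ∈ tilesOf 2 p ↔ t ≠ blankTile A ∧ ∃ x y : ℤ, t = p.window x y := by
  constructor
  · rintro ⟨i, j, hi, hj, ht⟩
    have hwindow : t = p.window (i - 1) (j - 1) := by
      ext1 u
      ext1 v
      rw [ht, Picture.bpix_eq_plane, Picture.window]
      push_cast
      congr 1 <;> ring
    refine ⟨?_, _, _, hwindow⟩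
    rw [hwindow, Picture.window_ne_blankTile_iff]
    simp only [borderRows, borderCols] at hi hj
    omega
  · rintro ⟨hne, x, y, rfl⟩
    rw [Picture.window_ne_blankTile_iff] at hne
    refine ⟨(x + 1).toNat, (y + 1).toNat, ?_, ?_, fun u v => ?_⟩
    · rw [borderRows]
      omega
    · rw [borderCols]
      omega
    · rw [Picture.bpix_eq_plane, Picture.window]
      congr 1 <;> omega

theorem mem_SLTLang_two_iff {T : Set (BTile A 2)} {p : Picture A} :
    p ∈ SLTLang 2 T ↔ ∀ x y : ℤ, p.window x y ∈ insert (blankTile A) T := by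
  constructor
  · intro hp x y
    by_cases hblank : p.window x y = blankTile A
    · exact Or.inl hblank
    · exact Or.inr (hp (mem_tilesOf_two_iff.2 ⟨hblank, x, y, rfl⟩))
  · intro h t ht
    obtain ⟨hne, x, y, rfl⟩ := mem_tilesOf_two_iff.1 ht
    exact (h x y).resolve_left hne

theorem SLTLang_mono {T T' : Set (BTile A k)} (h : T ⊆ T') : SLTLang k T ⊆ SLTLang k T' :=
  fun _ hp => Set.Subset.trans hp h

end LocalLanguages

section Substitution

variable {A B C : Type} {k : ℕ}

/-- The image of `P` under the picture morphism sending each letter `b` to the `k × k` picture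
`φ b`. -/
def Picture.substitute (hk : 0 < k) (φ : A → SqTile B k) (P : Picture A) : Picture B where
  rows := P.rows * k
  cols := P.cols * k
  rows_pos := Nat.mul_pos P.rows_pos hk
  cols_pos := Nat.mul_pos P.cols_pos hk
  pix i j := φ (P.pix i.divNat j.divNat) i.modNat j.modNat

theorem mul_add_lt_mul_iff {n i : ℕ} (a : Fin k) : i * k + a < n * k ↔ i < n := by
  rw [← Nat.div_lt_iff_lt_mul a.pos, mul_comm, Nat.mul_add_div a.pos, Nat.div_eq_of_lt a.isLt,
    add_zero]

namespace Picture

theorem pget_substitute (hk : 0 < k) (φ : A → SqTile B k) (P : Picture A) (i j : ℕ)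
    (a c : Fin k) :
    (P.substitute hk φ).pget (i * k + a) (j * k + c) = (P.pget i j).map (φ · a c) := by
  have hdiv (i : ℕ) (a : Fin k) : (i * k + a) / k = i := by
    rw [mul_comm, Nat.mul_add_div hk, Nat.div_eq_of_lt a.isLt, add_zero]
  have hmod (i : ℕ) (a : Fin k) : (i * k + a) % k = a := by
    rw [Nat.mul_add_mod_self_right, Nat.mod_eq_of_lt a.isLt]
  by_cases h : i < P.rows ∧ j < P.cols
  · rw [pget_of_lt h.1 h.2, pget_of_lt ((mul_add_lt_mul_iff a).2 h.1)
      ((mul_add_lt_mul_iff c).2 h.2)]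
    simp only [substitute, Fin.divNat, Fin.modNat, hdiv, hmod, Option.map_some]
  · have hleft : (P.substitute hk φ).pget (i * k + a) (j * k + c) = none := dif_neg <| by
      simpa only [substitute, mul_add_lt_mul_iff] using h
    have hright : P.pget i j = none := dif_neg h
    rw [hleft, hright, Option.map_none]

theorem plane_substitute (hk : 0 < k) (φ : A → SqTile B k) (P : Picture A) (x y : ℤ)
    (a c : Fin k) :
    (P.substitute hk φ).plane (x * k + (a : ℕ)) (y * k + (c : ℕ)) =
      (P.plane x y).map (φ · a c) := by
  have hneg {x : ℤ} (hx : x < 0) (a : Fin k) : x * k + (a : ℕ) < 0 := by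
    have := a.isLt
    nlinarith
  by_cases h : 0 ≤ x ∧ 0 ≤ y
  · obtain ⟨i, rfl⟩ := Int.eq_ofNat_of_zero_le h.1
    obtain ⟨j, rfl⟩ := Int.eq_ofNat_of_zero_le h.2
    exact_mod_cast pget_substitute hk φ P i j a c
  · have hout : ¬(0 ≤ x * k + (a : ℕ) ∧ 0 ≤ y * k + (c : ℕ)) := by
      rintro ⟨hx, hy⟩
      exact h ⟨not_lt.1 fun hlt => (hneg hlt a).not_ge hx,
        not_lt.1 fun hlt => (hneg hlt c).not_ge hy⟩
    rw [plane, plane, if_neg h, if_neg hout, Option.map_none]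

theorem eq_substitute {hk : 0 < k} {φ : A → SqTile B k} {P : Picture A} {q : Picture B}
    (hrows : q.rows = P.rows * k) (hcols : q.cols = P.cols * k)
    (hq : ∀ (i j : ℕ) (hi : i < P.rows) (hj : j < P.cols),
      hasSqAt q (i * k) (j * k) (φ (P.pix ⟨i, hi⟩ ⟨j, hj⟩))) :
    q = P.substitute hk φ := by
  refine ext_pget hrows hcols fun i hi j hj => ?_
  have hi' : i / k < P.rows := (Nat.div_lt_iff_lt_mul hk).2 (hrows ▸ hi)
  have hj' : j / k < P.cols := (Nat.div_lt_iff_lt_mul hk).2 (hcols ▸ hj)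
  have hblock := hq _ _ hi' hj' ⟨i % k, Nat.mod_lt _ hk⟩ ⟨j % k, Nat.mod_lt _ hk⟩
  have himage := pget_substitute hk φ P (i / k) (j / k) ⟨i % k, Nat.mod_lt _ hk⟩
    ⟨j % k, Nat.mod_lt _ hk⟩
  simp only [Nat.div_add_mod'] at hblock himage
  rw [hblock, himage, pget_of_lt hi' hj', Option.map_some]

theorem map_substitute (hk : 0 < k) (φ : A → SqTile B k) (f : B → C) (P : Picture A) :
    (P.substitute hk φ).map f = P.substitute hk fun b a c => f (φ b a c) :=
  rfl

theorem substitute_map (hk : 0 < k) (φ : B → SqTile C k) (f : A → B) (P : Picture A) :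
    (P.map f).substitute hk φ = P.substitute hk (φ ∘ f) :=
  rfl

end Picture

theorem encodedLang_eq_image (hk : 0 < k) (φ : A → SqTile B k) (L : Set (Picture A)) :
    encodedLang k φ L = Picture.substitute hk φ '' L := by
  ext q
  constructor
  · rintro ⟨P, hP, hrows, hcols, hq⟩
    exact ⟨P, hP, (Picture.eq_substitute hrows hcols hq).symm⟩
  · rintro ⟨P, hP, rfl⟩
    refine ⟨P, hP, rfl, rfl, fun i j hi hj a c => ?_⟩
    rw [Picture.pget_substitute, Picture.pget_of_lt hi hj, Option.map_some]

theorem exists_substitute_eq_of_mem_gridLang (hk : 0 < k) {X : Set (SqTile A k)} {p : Picture A}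
    (hp : p ∈ gridLang k X) : ∃ Q : Picture X, Q.substitute hk Subtype.val = p := by
  obtain ⟨⟨m, hm⟩, ⟨n, hn⟩, hgrid⟩ := hp
  rw [mul_comm] at hm hn
  have hfit {i m : ℕ} (hi : i < m) : i * k + k ≤ m * k := by
    rw [← Nat.succ_mul]
    exact Nat.mul_le_mul_right k hi
  choose block hmem hblock using fun (i : Fin m) (j : Fin n) =>
    hgrid i j (hm ▸ hfit i.isLt) (hn ▸ hfit j.isLt)
  let Q : Picture X :=
    { rows := m
      cols := n
      rows_pos := Nat.pos_of_mul_pos_right (hm ▸ p.rows_pos)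
      cols_pos := Nat.pos_of_mul_pos_right (hn ▸ p.cols_pos)
      pix := fun i j => ⟨block i j, hmem i j⟩ }
  exact ⟨Q, (Picture.eq_substitute hm hn fun i j hi hj => hblock ⟨i, hi⟩ ⟨j, hj⟩).symm⟩

end Substitution

section Pullback

variable {A B : Type} {k : ℕ}

/-- The row (or column) `a + u` of a square of two by two blocks of side `k`: the row reached from
row `a` of the first block after `u` steps. -/
def blockShift (a : Fin k) (u : Fin 2) : Fin (2 * k) := ⟨a + u, by omega⟩

/-- The `2 × 2` tile at offset `(a, c)` in the expansion of the tile `t` by `φ`, each border symbol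
being expanded to a block of border symbols. -/
def substTile (φ : A → SqTile B k) (t : BTile A 2) (a c : Fin k) : BTile B 2 :=
  fun u v => (t (blockShift a u).divNat (blockShift c v).divNat).map
    (φ · (blockShift a u).modNat (blockShift c v).modNat)

/-- The tiles all of whose expansions by `φ` are allowed by `T`. They define the preimage of the
local language of `T` under the picture morphism `φ`. -/
def pullbackTiles (φ : A → SqTile B k) (T : Set (BTile B 2)) : Set (BTile A 2) :=
  { t | ∀ a c : Fin k, substTile φ t a c ∈ insert (blankTile B) T }

theorem mul_add_blockShift (x : ℤ) (a : Fin k) (u : Fin 2) :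
    x * k + (a : ℕ) + (u : ℕ) =
      (x + ((blockShift a u).divNat : ℕ)) * k + ((blockShift a u).modNat : ℕ) := by
  have hdivmod : (a + u : ℤ) = (a + u) / k * k + (a + u) % k :=
    (Int.ediv_mul_add_emod _ _).symm
  simp only [blockShift, Fin.divNat, Fin.modNat]
  push_cast
  linarith

theorem Picture.window_substitute (hk : 0 < k) (φ : A → SqTile B k) (P : Picture A) (x y : ℤ)
    (a c : Fin k) :
    (P.substitute hk φ).window (x * k + (a : ℕ)) (y * k + (c : ℕ)) =
      substTile φ (P.window x y) a c := by
  ext1 u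
  ext1 v
  rw [window, mul_add_blockShift, mul_add_blockShift, plane_substitute]
  rfl

theorem exists_eq_mul_add_fin (hk : 0 < k) (x : ℤ) :
    ∃ (z : ℤ) (a : Fin k), x = z * k + (a : ℕ) := by
  have hlt : x % k < k := Int.emod_lt_of_pos x (by omega)
  have hnonneg : 0 ≤ x % k := Int.emod_nonneg x (by omega)
  refine ⟨x / k, ⟨(x % k).toNat, by omega⟩, ?_⟩
  rw [Int.toNat_of_nonneg hnonneg, Int.ediv_mul_add_emod]

theorem substitute_mem_SLTLang_iff {hk : 0 < k} {φ : A → SqTile B k} {T : Set (BTile B 2)}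
    {P : Picture A} :
    P.substitute hk φ ∈ SLTLang 2 T ↔ P ∈ SLTLang 2 (pullbackTiles φ T) := by
  have hblank : blankTile A ∈ pullbackTiles φ T := fun _ _ => Or.inl rfl
  rw [mem_SLTLang_two_iff, mem_SLTLang_two_iff, Set.insert_eq_of_mem hblank]
  constructor
  · intro h x y a c
    rw [← Picture.window_substitute hk]
    exact h _ _
  · intro h x y
    obtain ⟨x, a, rfl⟩ := exists_eq_mul_add_fin hk x
    obtain ⟨y, c, rfl⟩ := exists_eq_mul_add_fin hk y
    rw [Picture.window_substitute]
    exact h x y a c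

end Pullback

section Frames

variable {A B : Type} {k : ℕ}

theorem apply_eq_of_frameOf_eq {hk : 0 < k} {r s : SqTile A k}
    (h : frameOf hk r = frameOf hk s) {a c : Fin k}
    (hac : ((a : ℕ) = 0 ∨ (a : ℕ) + 1 = k) ∨ (c : ℕ) = 0 ∨ (c : ℕ) + 1 = k) :
    r a c = s a c := by
  simp only [frameOf, Prod.mk.injEq] at h
  obtain ⟨htop, hright, hbottom, hleft⟩ := h
  rcases hac with (ha | ha) | hc | hc
  · obtain rfl : a = ⟨0, hk⟩ := Fin.ext ha
    exact congrFun htop c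
  · rw [show a = ⟨k - 1, by omega⟩ from Fin.ext (by simp only; omega)]
    exact congrFun hbottom c
  · obtain rfl : c = ⟨0, hk⟩ := Fin.ext hc
    exact congrFun hleft a
  · rw [show c = ⟨k - 1, by omega⟩ from Fin.ext (by simp only; omega)]
    exact congrFun hright a

theorem modNat_blockShift_of_add_one_eq {a : Fin k} (ha : (a : ℕ) + 1 = k) (u : Fin 2) :
    ((blockShift a u).modNat : ℕ) = 0 ∨ ((blockShift a u).modNat : ℕ) + 1 = k := by
  fin_cases u
  · right
    simp [blockShift, Nat.mod_eq_of_lt a.isLt, ha]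
  · left
    simp [blockShift, ha]

theorem substTile_eq_of_frameOf_eq {hk : 0 < k} {φ ψ : A → SqTile B k}
    (hframe : ∀ b, frameOf hk (φ b) = frameOf hk (ψ b)) (t : BTile A 2) {a c : Fin k}
    (hac : (a : ℕ) + 1 = k ∨ (c : ℕ) + 1 = k) : substTile φ t a c = substTile ψ t a c := by
  ext1 u
  ext1 v
  exact Option.map_congr fun b _ => apply_eq_of_frameOf_eq (hframe b) <|
    hac.imp (modNat_blockShift_of_add_one_eq · u) (modNat_blockShift_of_add_one_eq · v)

theorem divNat_blockShift_of_add_one_lt {a : Fin k} (ha : (a : ℕ) + 1 < k) (u : Fin 2) :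
    (blockShift a u).divNat = 0 :=
  Fin.ext (Nat.div_eq_of_lt (by simp only [blockShift]; omega))

theorem modNat_blockShift_of_add_one_lt {a : Fin k} (ha : (a : ℕ) + 1 < k) (u : Fin 2) :
    ((blockShift a u).modNat : ℕ) = a + u :=
  Nat.mod_eq_of_lt (by simp only [blockShift]; omega)

theorem substTile_mem_of_hasSqAt {T : Set (BTile B 2)} {ψ : A → SqTile B k}
    (hψ : ∀ b, ∃ p ∈ SLTLang 2 T, ∃ i j : ℕ, hasSqAt p i j (ψ b)) (t : BTile A 2)
    {a c : Fin k} (ha : (a : ℕ) + 1 < k) (hc : (c : ℕ) + 1 < k) :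
    substTile ψ t a c ∈ insert (blankTile B) T := by
  have hentry (u v : Fin 2) : substTile ψ t a c u v =
      (t 0 0).map (ψ · (blockShift a u).modNat (blockShift c v).modNat) := by
    rw [substTile, divNat_blockShift_of_add_one_lt ha, divNat_blockShift_of_add_one_lt hc]
  cases hletter : t 0 0 with
  | none =>
    left
    ext1 u
    ext1 v
    rw [hentry, hletter]
    rfl
  | some b =>
    obtain ⟨p, hp, i, j, hij⟩ := hψ b
    have hwindow : substTile ψ t a c = p.window (i + a : ℕ) (j + c : ℕ) := by
      ext1 u
      ext1 v
      rw [hentry, hletter, Option.map_some, ← hij, modNat_blockShift_of_add_one_lt ha,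
        modNat_blockShift_of_add_one_lt hc, ← Picture.plane_natCast, Picture.window]
      push_cast
      simp only [add_assoc]
    rw [hwindow]
    exact mem_SLTLang_two_iff.1 hp _ _

theorem pullbackTiles_subset_of_frameOf_eq {hk : 0 < k} {T : Set (BTile B 2)}
    {φ ψ : A → SqTile B k} (hframe : ∀ b, frameOf hk (φ b) = frameOf hk (ψ b))
    (hψ : ∀ b, ∃ p ∈ SLTLang 2 T, ∃ i j : ℕ, hasSqAt p i j (ψ b)) :
    pullbackTiles φ T ⊆ pullbackTiles ψ T := by
  intro t ht a c
  by_cases hac : (a : ℕ) + 1 = k ∨ (c : ℕ) + 1 = k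
  · rw [← substTile_eq_of_frameOf_eq hframe t hac]
    exact ht a c
  · exact substTile_mem_of_hasSqAt hψ t (by omega) (by omega)

theorem substitute_mem_SLTLang_of_frameOf_eq {hk : 0 < k} {T : Set (BTile B 2)}
    {φ ψ : A → SqTile B k} (hframe : ∀ b, frameOf hk (φ b) = frameOf hk (ψ b))
    (hψ : ∀ b, ∃ p ∈ SLTLang 2 T, ∃ i j : ℕ, hasSqAt p i j (ψ b)) {P : Picture A}
    (hP : P.substitute hk φ ∈ SLTLang 2 T) : P.substitute hk ψ ∈ SLTLang 2 T :=
  substitute_mem_SLTLang_iff.2 <| SLTLang_mono (pullbackTiles_subset_of_frameOf_eq hframe hψ) <|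
    substitute_mem_SLTLang_iff.1 hP

end Frames

section FrameLetters

variable {A B : Type} {k : ℕ}

/-- The `k × k` blocks at grid positions in pictures of `L`. -/
def tessellationBlocks (k : ℕ) (L : Set (Picture A)) : Set (SqTile A k) :=
  { r | ∃ p ∈ L, ∃ i j : ℕ, k ∣ i ∧ k ∣ j ∧ hasSqAt p i j r }

theorem mem_gridLang_tessellationBlocks {L : Set (Picture A)} {p : Picture A} (hp : p ∈ L)
    (hrows : k ∣ p.rows) (hcols : k ∣ p.cols) : p ∈ gridLang k (tessellationBlocks k L) := by
  refine ⟨hrows, hcols, fun i j hi hj => ?_⟩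
  obtain ⟨x, hx⟩ := Picture.exists_hasSqAt hi hj
  exact ⟨x, ⟨p, hp, _, _, dvd_mul_left k i, dvd_mul_left k j, hx⟩, hx⟩

/-- The pairs `(f(r), π(r))` for `r` ranging over a set `X` of blocks. -/
abbrev FrameLetter (hk : 0 < k) (X : Set (SqTile A k)) (π : A → B) : Type :=
  { b : ((Fin k → A) × (Fin k → A) × (Fin k → A) × (Fin k → A)) × SqTile B k //
    ∃ r : SqTile A k, r ∈ X ∧ b = (frameOf hk r, fun a c => π (r a c)) }

namespace FrameLetter

variable {hk : 0 < k} {X : Set (SqTile A k)} {π : A → B}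

/-- The letter `(f(r), π(r))` of the block `r`. -/
def ofBlock (hk : 0 < k) (π : A → B) (r : X) : FrameLetter hk X π :=
  ⟨(frameOf hk r, fun a c => π (r.val a c)), r, r.property, rfl⟩

/-- A chosen block `r` in `X` with letter `b = (f(r), π(r))`. -/
noncomputable def block (b : FrameLetter hk X π) : SqTile A k :=
  b.property.choose

theorem block_mem (b : FrameLetter hk X π) : b.block ∈ X :=
  b.property.choose_spec.1

theorem frameOf_block (b : FrameLetter hk X π) : frameOf hk b.block = b.val.1 :=
  (congrArg Prod.fst b.property.choose_spec.2).symm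

theorem map_block (b : FrameLetter hk X π) : (fun a c => π (b.block a c)) = b.val.2 :=
  (congrArg Prod.snd b.property.choose_spec.2).symm

end FrameLetter

end FrameLetters

theorem padded_as_morphic_image_of_local_over_frames_general {A B : Type} {k : ℕ} (hk : 0 < k)
    (T : Set (BTile A 2)) (π : A → B) :
    ∃ M : Set (BTile (FrameLetter hk (tessellationBlocks k (SLTLang 2 T)) π) 2),
      { q ∈ Picture.map π '' SLTLang 2 T | k ∣ q.rows ∧ k ∣ q.cols } =
        encodedLang k (fun b => b.val.2) (SLTLang 2 M) := by
  refine ⟨pullbackTiles FrameLetter.block T, ?_⟩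
  rw [encodedLang_eq_image hk]
  ext q
  constructor
  · rintro ⟨⟨p, hp, rfl⟩, hrows, hcols⟩
    obtain ⟨Q, rfl⟩ := exists_substitute_eq_of_mem_gridLang hk
      (mem_gridLang_tessellationBlocks hp hrows hcols)
    refine ⟨Q.map (FrameLetter.ofBlock hk π), ?_, rfl⟩
    rw [← substitute_mem_SLTLang_iff (hk := hk), Picture.substitute_map]
    refine substitute_mem_SLTLang_of_frameOf_eq
      (fun r => (FrameLetter.ofBlock hk π r).frameOf_block.symm) (fun r => ?_) hp
    obtain ⟨p', hp', i, j, -, -, hij⟩ := (FrameLetter.ofBlock hk π r).block_mem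
    exact ⟨p', hp', i, j, hij⟩
  · rintro ⟨P, hP, rfl⟩
    refine ⟨⟨P.substitute hk FrameLetter.block, substitute_mem_SLTLang_iff.2 hP, ?_⟩,
      dvd_mul_left k _, dvd_mul_left k _⟩
    rw [Picture.map_substitute, funext FrameLetter.map_block]

theorem sep_dvd_padded {A : Type} (k : ℕ) (R : Set (Picture A)) :
    { q ∈ padded k R | k ∣ q.rows ∧ k ∣ q.cols } = padded k R :=
  Set.sep_eq_self_iff_mem_true.2 fun _ ⟨_, _, _, _, _, _, hrows, hcols, _⟩ => ⟨hrows, hcols⟩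

/-- Let `k ≥ 2`, let `R ⊆ Σ^{++}` be tiling recognizable and let the padded
language `R^(k)` over `Σ_$ = Σ ∪ {$}` be recognized by the tiling system
`(Σ_$, Γ, T, π)`.  Then there is a set `M` of 2-tiles over the alphabet
`B ∪ {#}`, where `B` consists of the pairs `(f(r), π(r))` for `r` ranging
over the `k × k` blocks occurring in the `k`-tessellations of the pictures
of `L(T)` (with `f(r)` the frame of `r`), such that `R^(k)` is the image of
the local language `L(M)` under the picture morphism `π_k` sending each
letter `(f(r), π(r))` of `B` to the `k × k` picture `π(r)`. -/
theorem padded_as_morphic_image_of_local_over_frames :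
    ∀ (Sig : Type) (_ : Fintype Sig) (R : Set (Picture Sig)),
      (∃ (G0 : Type) (_ : Fintype G0) (T0 : Set (BTile G0 2)) (π0 : G0 → Sig),
        R = Picture.map π0 '' SLTLang 2 T0) →
      ∀ (k : ℕ) (hk : 2 ≤ k)
        (Gam : Type) (_ : Fintype Gam) (T : Set (BTile Gam 2))
        (π : Gam → Option Sig),
        padded k R = Picture.map π '' SLTLang 2 T →
        ∃ M : Set (BTile
            { b : ((Fin k → Gam) × (Fin k → Gam) × (Fin k → Gam) × (Fin k → Gam))
                    × SqTile (Option Sig) k //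
              ∃ r : SqTile Gam k,
                (∃ p ∈ SLTLang 2 T, ∃ i j : ℕ, k ∣ i ∧ k ∣ j ∧ hasSqAt p i j r) ∧
                b = (frameOf (by omega) r, fun a c => π (r a c)) } 2),
          padded k R = encodedLang k (fun b => b.val.2) (SLTLang 2 M) := by
  intro Sig _ R _ k hk Gam _ T π hpad
  obtain ⟨M, hM⟩ := padded_as_morphic_image_of_local_over_frames_general (Nat.zero_lt_of_lt hk) T π
  exact ⟨M, by rw [← sep_dvd_padded, hpad]; exact hM⟩
end
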